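/- Let X, Y be finite sets with |X| = m and |Y| = k. For any set A of channels from X to Y and any ε > 0, the ε-covering number N_ε(A) satisfies N_ε(A) ≤ (1/(2ε) + (k+1)/2)^{m·k}. -/

import Mathlib

open MeasureTheory in
/-- A product of `ℓ¹` balls. -/
def coverK (X Y : Type*) [Fintype X] [Fintype Y] (r : ℝ) : Set (X × Y → ℝ) :=
  {z | ∀ x, ∑ y, |z (x, y)| < r}

section
open MeasureTheory
open scoped Pointwise
variable {X Y : Type*} [Fintype X] [Fintype Y]

lemma coverK_open (r : ℝ) : IsOpen (coverK X Y r) := by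
  unfold coverK
  simp only [Set.ofPred_forall]
  refine isOpen_iInter_of_finite fun x => ?_
  exact isOpen_lt (by fun_prop) continuous_const

lemma coverK_coord {r : ℝ} {z : X × Y → ℝ} (hz : z ∈ coverK X Y r) (i : X × Y) :
    |z i| < r :=
  lt_of_le_of_lt (Finset.single_le_sum (f := fun y => |z (i.1, y)|)
    (fun _ _ => abs_nonneg _) (Finset.mem_univ i.2)) (hz i.1)

lemma coverK_pos {r : ℝ} (hr : 0 < r) : 0 < volume (coverK X Y r) :=
  (coverK_open r).measure_pos volume ⟨0, fun x => by simpa using hr⟩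

lemma coverK_fin {r : ℝ} (hr : 0 < r) : volume (coverK X Y r) < ⊤ := by
  refine lt_of_le_of_lt (measure_mono (t := Metric.closedBall 0 r) ?_)
    Metric.isBounded_closedBall.measure_lt_top
  intro z hz
  rw [mem_closedBall_zero_iff, pi_norm_le_iff_of_nonneg hr.le]
  intro i
  exact (coverK_coord hz i).le

lemma coverK_scale {r c : ℝ} (hc : 0 < c) :
    volume (coverK X Y (c * r)) =
      ENNReal.ofReal (c ^ (Fintype.card X * Fintype.card Y)) * volume (coverK X Y r) := by
  have : coverK X Y (c * r) = c • coverK X Y r := by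
    ext z
    rw [Set.mem_smul_set_iff_inv_smul_mem₀ hc.ne']
    simp only [coverK, Set.mem_setOf_eq, Pi.smul_apply, smul_eq_mul, abs_mul,
      ← Finset.mul_sum, abs_of_pos (inv_pos.2 hc)]
    refine forall_congr' fun x => ?_
    rw [inv_mul_lt_iff₀ hc]
  rw [this, Measure.addHaar_smul]
  simp [abs_of_pos hc]

/-- sign flip -/
def coverFlip (s : X × Y → Bool) (z : X × Y → ℝ) : X × Y → ℝ :=
  fun i => if s i then z i else - z i

lemma coverFlip_mp (s : X × Y → Bool) :
    MeasurePreserving (coverFlip s) (volume : Measure (X × Y → ℝ)) volume := by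
  have := volume_preserving_pi (α' := fun _ : X × Y => ℝ) (β' := fun _ : X × Y => ℝ)
    (f := fun i t => if s i then t else -t) (by
      intro i
      cases h : s i
      · simpa using Measure.measurePreserving_neg (volume : Measure ℝ)
      · simp only [if_true]
        exact MeasurePreserving.id (volume : Measure ℝ))
  exact this

lemma cover_card_le (S : Finset (X → Y → ℝ)) (ε : ℝ) (hε : 0 < ε)
    (hch : ∀ A ∈ S, (∀ x y, 0 ≤ A x y) ∧ ∀ x, ∑ y, A x y = 1)
    (hsep : ∀ A ∈ S, ∀ B ∈ S, A ≠ B → ∃ x, ε < (1 / 2) * ∑ y, |A x y - B x y|) :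
    (S.card : ℝ) ≤ (1 / (2 * ε) + ((Fintype.card Y : ℝ) + 1) / 2) ^
      (Fintype.card X * Fintype.card Y) := by
  classical
  set N := Fintype.card X * Fintype.card Y with hN
  set k : ℝ := (Fintype.card Y : ℝ) with hk
  have hk0 : 0 ≤ k := by positivity
  set c : ℝ := 1 / ε + (k + 1) with hc
  have hc0 : 0 < c := by positivity
  let ctr (A : X → Y → ℝ) : X × Y → ℝ := fun i => A i.1 i.2 + ε
  let T (q : (X → Y → ℝ) × (X × Y → Bool)) : Set (X × Y → ℝ) :=
    coverFlip q.2 ⁻¹' ((fun z => z - ctr q.1) ⁻¹' coverK X Y ε)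
  have hmeasK : MeasurableSet (coverK X Y ε) := (coverK_open ε).measurableSet
  have hsub : ∀ A, MeasurePreserving (fun z => z - ctr A)
      (volume : Measure (X × Y → ℝ)) volume := fun A => measurePreserving_sub_right _ _
  have hTm : ∀ q, MeasurableSet (T q) := fun q =>
    (coverFlip_mp q.2).measurable ((hsub q.1).measurable hmeasK)
  have hTv : ∀ q, volume (T q) = volume (coverK X Y ε) := fun q => by
    rw [(coverFlip_mp q.2).measure_preimage ((hsub q.1).measurable hmeasK).nullMeasurableSet,
      (hsub q.1).measure_preimage hmeasK.nullMeasurableSet]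
  have hpos : ∀ q ∈ S ×ˢ (Finset.univ : Finset (X × Y → Bool)), ∀ z ∈ T q, ∀ i,
      0 < coverFlip q.2 z i := by
    intro q hq z hz i
    have h1 := coverK_coord hz i
    have h2 := (hch q.1 (Finset.mem_product.1 hq).1).1 i.1 i.2
    have h3 := (abs_lt.1 h1).1
    simp only [Pi.sub_apply, ctr] at h3
    linarith
  have hTsub : ∀ q ∈ S ×ˢ (Finset.univ : Finset (X × Y → Bool)),
      T q ⊆ coverK X Y (c * ε) := by
    intro q hq z hz x
    have h1 := hz x
    have h2 := (hch q.1 (Finset.mem_product.1 hq).1).2 x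
    have h3 : ∀ y, |z (x, y)| ≤ |(coverFlip q.2 z - ctr q.1) (x, y)| + (q.1 x y + ε) := by
      intro y
      have h4 : |z (x, y)| = coverFlip q.2 z (x, y) := by
        rw [← abs_of_pos (hpos q hq z hz (x, y))]
        unfold coverFlip
        split_ifs <;> simp
      rw [h4]
      have := le_abs_self ((coverFlip q.2 z - ctr q.1) (x, y))
      simp only [Pi.sub_apply, ctr] at this ⊢
      linarith
    have h5 := Finset.sum_le_sum (s := Finset.univ) fun y _ => h3 y
    rw [Finset.sum_add_distrib, Finset.sum_add_distrib, h2] at h5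
    simp only [Finset.sum_const, Finset.card_univ, nsmul_eq_mul] at h5
    have h6 : c * ε = 1 + (k + 1) * ε := by rw [hc]; field_simp
    rw [h6]
    change _ < ε at h1
    linarith
  have hdisj : Set.PairwiseDisjoint
      (↑(S ×ˢ (Finset.univ : Finset (X × Y → Bool))) : Set _) T := by
    intro q hq q' hq' hne
    rw [Function.onFun, Set.disjoint_left]
    intro z hz hz'
    apply hne
    have hs : q.2 = q'.2 := by
      funext i
      have h1 := hpos q hq z hz i
      have h2 := hpos q' hq' z hz' i
      unfold coverFlip at h1 h2
      cases h : q.2 i <;> cases h' : q'.2 i <;> simp [h, h'] at h1 h2 ⊢ <;> linarith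
    refine Prod.ext ?_ hs
    by_contra hA
    obtain ⟨x, hx⟩ := hsep q.1 (Finset.mem_product.1 hq).1 q'.1 (Finset.mem_product.1 hq').1 hA
    have h1 : _ < ε := hz x
    have h2 : _ < ε := hz' x
    rw [← hs] at h2
    have h3 : ∀ y, |q.1 x y - q'.1 x y| ≤ |(coverFlip q.2 z - ctr q.1) (x, y)|
        + |(coverFlip q.2 z - ctr q'.1) (x, y)| := by
      intro y
      have := abs_sub ((coverFlip q.2 z - ctr q'.1) (x, y)) ((coverFlip q.2 z - ctr q.1) (x, y))
      rw [add_comm]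
      refine le_trans (le_of_eq ?_) this
      congr 1
      simp only [Pi.sub_apply, ctr]
      ring
    have h5 := Finset.sum_le_sum (s := Finset.univ) fun y _ => h3 y
    rw [Finset.sum_add_distrib] at h5
    linarith
  have key : ((S.card * 2 ^ N : ℕ) : ENNReal) * volume (coverK X Y ε) ≤
      ENNReal.ofReal (c ^ N) * volume (coverK X Y ε) := by
    rw [← coverK_scale hc0]
    refine le_trans (le_of_eq ?_) (measure_mono (Set.iUnion₂_subset hTsub))
    rw [measure_biUnion_finset hdisj fun q _ => hTm q]
    simp [hTv, Finset.card_product, hN]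
  rw [ENNReal.mul_le_mul_iff_left (coverK_pos hε).ne' (coverK_fin hε).ne,
    ← ENNReal.ofReal_natCast, ENNReal.ofReal_le_ofReal_iff (by positivity)] at key
  push_cast at key
  have : 1 / (2 * ε) + (k + 1) / 2 = c / 2 := by rw [hc]; field_simp
  rw [this, div_pow, le_div_iff₀ (by positivity)]
  exact key

end

/-- Covering-number bound: let `X, Y` be finite sets with `|X| = m`, `|Y| = k`. For any set
`𝒜` of channels from `X` to `Y` and any `ε > 0`, there is a subset `S ⊆ 𝒜` which is an
`ε`-cover of `𝒜` (in the distance `d(A,B) = max_x ½ ∑_y |A(y|x) − B(y|x)|`) of cardinality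
at most `(1/(2ε) + (k+1)/2)^{m·k}`. -/
theorem covering_number_bound
    {X Y : Type*} [Fintype X] [Fintype Y]
    (m k : ℕ) (hm : Fintype.card X = m) (hk : Fintype.card Y = k)
    (𝒜 : Set (X → Y → ℝ))
    (hch : ∀ A ∈ 𝒜, (∀ x y, 0 ≤ A x y) ∧ ∀ x, ∑ y, A x y = 1)
    (ε : ℝ) (hε : 0 < ε) :
    ∃ S : Finset (X → Y → ℝ), ↑S ⊆ 𝒜 ∧
      (∀ A ∈ 𝒜, ∃ B ∈ S, ∀ x, (1 / 2) * ∑ y, |A x y - B x y| ≤ ε) ∧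
      (S.card : ℝ) ≤ (1 / (2 * ε) + (k + 1) / 2) ^ (m * k) := by
  classical
  subst hm hk
  by_contra hcon
  have hbound : ∀ S : Finset (X → Y → ℝ), ↑S ⊆ 𝒜 →
      (∀ A ∈ S, ∀ B ∈ S, A ≠ B → ∃ x, ε < (1 / 2) * ∑ y, |A x y - B x y|) →
      (S.card : ℝ) ≤ (1 / (2 * ε) + ((Fintype.card Y : ℝ) + 1) / 2) ^
        (Fintype.card X * Fintype.card Y) := fun S hS hsep =>
    cover_card_le S ε hε (fun A hA => hch A (hS hA)) hsep
  have hall : ∀ n : ℕ, ∃ S : Finset (X → Y → ℝ), ↑S ⊆ 𝒜 ∧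
      (∀ A ∈ S, ∀ B ∈ S, A ≠ B → ∃ x, ε < (1 / 2) * ∑ y, |A x y - B x y|) ∧ S.card = n := by
    intro n
    induction n with
    | zero => exact ⟨∅, by simp, by simp, by simp⟩
    | succ n ih =>
      obtain ⟨S, hS, hsep, hcard⟩ := ih
      have : ∃ A ∈ 𝒜, ∀ B ∈ S, ∃ x, ε < (1 / 2) * ∑ y, |A x y - B x y| := by
        by_contra hno
        push Not at hno
        exact hcon ⟨S, hS, hno, hbound S hS hsep⟩
      obtain ⟨A, hA, hAS⟩ := this
      have hnot : A ∉ S := fun h => by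
        obtain ⟨x, hx⟩ := hAS A h
        simp at hx
        linarith
      refine ⟨insert A S, ?_, ?_, ?_⟩
      · intro B hB
        rcases Finset.mem_insert.1 hB with rfl | h
        · exact hA
        · exact hS h
      · intro B hB C hC hne
        rcases Finset.mem_insert.1 hB with rfl | h <;> rcases Finset.mem_insert.1 hC with rfl | h'
        · exact absurd rfl hne
        · exact hAS C h'
        · obtain ⟨x, hx⟩ := hAS B h
          refine ⟨x, ?_⟩
          simpa only [abs_sub_comm] using hx
        · exact hsep B h C h' hne
      · rw [Finset.card_insert_of_notMem hnot, hcard]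
  obtain ⟨n, hn⟩ := exists_nat_gt ((1 / (2 * ε) + ((Fintype.card Y : ℝ) + 1) / 2) ^
        (Fintype.card X * Fintype.card Y))
  obtain ⟨S, hS, hsep, hcard⟩ := hall n
  have := hbound S hS hsep
  rw [hcard] at this
  linarith
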